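/- Fix X₀ ∈ S^{d−1}, let Q_t be the Kac walk of length t on ℝ^d, and set X_t = Q_t X₀. Then for any ε ∈ (1/d, 1/2), any k ∈ {1,…,d}, and any t ≥ 0, P[ Σ_{i=1}^k X_t[i]² ∉ [(1−ε)k/d, (1+ε)k/d] ] ≤ 8 d⁴ exp(−t/(2d)) + 2 exp(−ε² k / 64). -/

import Mathlib

noncomputable section

open MeasureTheory Real
open scoped ENNReal

namespace KacJL

instance matrixMeasurableSpace {m n : Type*} : MeasurableSpace (Matrix m n ℝ) :=
  inferInstanceAs (MeasurableSpace (m → n → ℝ))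

/-- The rotation by angle `θ` in the `(i,j)` coordinate plane of `ℝ^d`. -/
def rotM (d : ℕ) (i j : Fin d) (θ : ℝ) : Matrix (Fin d) (Fin d) ℝ :=
  Matrix.of fun k l =>
    if k = i ∧ l = i then Real.cos θ
    else if k = i ∧ l = j then -Real.sin θ
    else if k = j ∧ l = i then Real.sin θ
    else if k = j ∧ l = j then Real.cos θ
    else if k = l then 1 else 0

/-- The uniform distribution on pairs of distinct coordinates in `Fin d`. -/
def pairUniform (d : ℕ) : Measure (Fin d × Fin d) :=
  ((d * (d - 1) : ℕ) : ℝ≥0∞)⁻¹ •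
    (Measure.count.restrict {p : Fin d × Fin d | p.1 ≠ p.2})

/-- The uniform distribution on `[0, 2π)`. -/
def angleUniform : Measure ℝ :=
  (ENNReal.ofReal (2 * Real.pi))⁻¹ • (volume.restrict (Set.Ico 0 (2 * Real.pi)))

/-- The distribution of the update variables of one step of the Kac walk. -/
def kacParam (d : ℕ) : Measure ((Fin d × Fin d) × ℝ) :=
  (pairUniform d).prod angleUniform

/-- The product `R_{i_T,j_T,θ_T} ⋯ R_{i_1,j_1,θ_1}` of the rotations determined by the
update variables `ω`. -/
def kacMatrix {d T : ℕ} (ω : Fin T → (Fin d × Fin d) × ℝ) : Matrix (Fin d) (Fin d) ℝ :=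
  ((List.ofFn fun t => rotM d (ω t).1.1 (ω t).1.2 (ω t).2).reverse).prod

/-- The law of the Kac walk of length `T` on `ℝ^d`. -/
def kacMeasure (d T : ℕ) : Measure (Matrix (Fin d) (Fin d) ℝ) :=
  Measure.map kacMatrix (Measure.pi fun _ : Fin T => kacParam d)

/-- The Euclidean norm on `ℝ^d`. -/
def l2norm {d : ℕ} (x : Fin d → ℝ) : ℝ := Real.sqrt (∑ i, x i ^ 2)

/-!
The energies `X_t[i]²` form a Markov chain on the simplex: two random coordinates pool their
energy and split it in the proportion `cos² φ : sin² φ` with `φ` uniform. The update is linear in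
the energies, so two copies driven by the same updates differ by a vector of sum zero whose mean
squared norm contracts by the factor `1 - 1/(2d)` at each step. The second copy starts from its
stationary law, the normalized squares of a standard Gaussian vector, for which Chernoff's bound
gives concentration; by Cauchy–Schwarz and Markov, the two copies are close enough after `t` steps
to transfer it to the first.
-/

open Function ProbabilityTheory
open scoped Finset Matrix

section Rotation

variable {ι : Type*} [DecidableEq ι]

/-- The transfer of energy between the coordinates `i` and `j` in one step of the Kac walk: they
pool `p i + p j` and receive the shares `cos² φ` and `sin² φ` of it. It is meant for `i ≠ j`. -/
def exchange (i j : ι) (φ : ℝ) (p : ι → ℝ) : ι → ℝ :=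
  update (update p j ((p i + p j) * sin φ ^ 2)) i ((p i + p j) * cos φ ^ 2)

lemma exchange_sub (i j : ι) (φ : ℝ) (p q : ι → ℝ) :
    exchange i j φ (p - q) = exchange i j φ p - exchange i j φ q := by
  ext k
  simp only [exchange, update_apply, Pi.sub_apply]
  split_ifs <;> ring

lemma exchange_add_two_pi (i j : ι) (φ : ℝ) (p : ι → ℝ) :
    exchange i j (φ + 2 * π) p = exchange i j φ p := by
  simp only [exchange, cos_add_two_pi, sin_add_two_pi]

lemma continuous_exchange (i j : ι) :
    Continuous fun z : ℝ × (ι → ℝ) => exchange i j z.1 z.2 := by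
  unfold exchange
  fun_prop

lemma sum_comp_update [Fintype ι] {α M : Type*} [AddCommGroup M] (f : α → M) (w : ι → α) (i : ι)
    (u : α) : ∑ k, f (update w i u k) = ∑ k, f (w k) - f (w i) + f u := by
  simp_rw [← comp_apply (f := f), comp_update, Finset.sum_update_of_mem (Finset.mem_univ i),
    Finset.sum_sdiff_eq_sub (Finset.subset_univ _), Finset.sum_singleton]
  abel

lemma sum_comp_update_update [Fintype ι] {α M : Type*} [AddCommGroup M] (f : α → M) (w : ι → α)
    {i j : ι} (hij : i ≠ j) (u v : α) :
    ∑ k, f (update (update w j v) i u k) =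
      ∑ k, f (w k) - f (w i) - f (w j) + f u + f v := by
  rw [sum_comp_update, sum_comp_update, update_of_ne hij]
  abel

lemma sum_exchange [Fintype ι] {i j : ι} (hij : i ≠ j) (φ : ℝ) (p : ι → ℝ) :
    ∑ k, exchange i j φ p k = ∑ k, p k := by
  have h := sum_comp_update_update id p hij ((p i + p j) * cos φ ^ 2) ((p i + p j) * sin φ ^ 2)
  simp only [id] at h
  rw [exchange, h]
  linear_combination (p i + p j) * sin_sq_add_cos_sq φ

lemma sum_sq_exchange [Fintype ι] {i j : ι} (hij : i ≠ j) (φ : ℝ) (p : ι → ℝ) :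
    ∑ k, exchange i j φ p k ^ 2 =
      ∑ k, p k ^ 2 - p i ^ 2 - p j ^ 2 + (p i + p j) ^ 2 -
        2 * (p i + p j) ^ 2 * (sin φ ^ 2 * cos φ ^ 2) := by
  rw [exchange, sum_comp_update_update (· ^ 2) p hij, sin_sq]
  ring

variable {d : ℕ} {i j : Fin d}

lemma rotM_mulVec (hij : i ≠ j) (θ : ℝ) (x : Fin d → ℝ) :
    rotM d i j θ *ᵥ x =
      update (update x j (sin θ * x i + cos θ * x j)) i (cos θ * x i - sin θ * x j) := by
  have row_i : rotM d i j θ i = Pi.single i (cos θ) - Pi.single j (sin θ) := by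
    ext l; simp only [rotM, Matrix.of_apply, Pi.sub_apply, Pi.single_apply]; grind
  have row_j : rotM d i j θ j = Pi.single i (sin θ) + Pi.single j (cos θ) := by
    ext l; simp only [rotM, Matrix.of_apply, Pi.add_apply, Pi.single_apply]; grind
  have row_ne {k : Fin d} (hki : k ≠ i) (hkj : k ≠ j) : rotM d i j θ k = Pi.single k 1 := by
    ext l; simp only [rotM, Matrix.of_apply, Pi.single_apply]; grind
  ext k
  change rotM d i j θ k ⬝ᵥ x = _
  rcases eq_or_ne k i with rfl | hki
  · simp [row_i, sub_dotProduct]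
  rcases eq_or_ne k j with rfl | hkj
  · simp [row_j, add_dotProduct, hki]
  · simp [row_ne hki hkj, hki, hkj]

lemma sum_sq_rotM_mulVec (hij : i ≠ j) (θ : ℝ) (x : Fin d → ℝ) :
    ∑ k, (rotM d i j θ *ᵥ x) k ^ 2 = ∑ k, x k ^ 2 := by
  rw [rotM_mulVec hij, sum_comp_update_update (· ^ 2) x hij]
  linear_combination (x i ^ 2 + x j ^ 2) * sin_sq_add_cos_sq θ

-- In polar coordinates for `(x i, x j)`, the rotation by `θ` adds `θ` to the angle.
lemma exists_sq_rotM_mulVec_eq_exchange (hij : i ≠ j) (x : Fin d → ℝ) :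
    ∃ α, ∀ θ, (rotM d i j θ *ᵥ x) ^ 2 = exchange i j (θ + α) (x ^ 2) := by
  obtain ⟨r, α, hi, hj⟩ : ∃ r α, x i = r * cos α ∧ x j = r * sin α :=
    ⟨‖(⟨x i, x j⟩ : ℂ)‖, Complex.arg ⟨x i, x j⟩,
      (Complex.norm_mul_cos_arg ⟨x i, x j⟩).symm, (Complex.norm_mul_sin_arg ⟨x i, x j⟩).symm⟩
  have energy : (x ^ 2) i + (x ^ 2) j = r ^ 2 := by
    rw [Pi.pow_apply, Pi.pow_apply, hi, hj]
    linear_combination r ^ 2 * sin_sq_add_cos_sq α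
  refine ⟨α, fun θ => funext fun k => ?_⟩
  rw [rotM_mulVec hij, exchange, energy, cos_add, sin_add, hi, hj]
  simp only [Pi.pow_apply, update_apply]
  split_ifs <;> ring

lemma continuous_rotM (i j : Fin d) : Continuous (rotM d i j) := by
  refine continuous_matrix fun k l => ?_
  simp only [rotM, Matrix.of_apply]
  split_ifs <;> fun_prop

end Rotation

section UpdateLaw

instance : IsProbabilityMeasure angleUniform where
  measure_univ := by
    simp only [angleUniform, Measure.smul_apply, Measure.restrict_apply_univ, Real.volume_Ico,
      sub_zero, smul_eq_mul]
    exact ENNReal.inv_mul_cancel (by simp [pi_pos]) ENNReal.ofReal_ne_top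

lemma lintegral_angleUniform (f : ℝ → ℝ≥0∞) (α : ℝ) (hf : Periodic f (2 * π)) :
    ∫⁻ θ, f θ ∂angleUniform =
      (ENNReal.ofReal (2 * π))⁻¹ * ∫⁻ θ in Set.Ioc α (α + 2 * π), f θ := by
  have : VAddInvariantMeasure (AddSubgroup.zmultiples (2 * π)) ℝ volume :=
    ⟨fun c s _ => measure_preimage_add _ (c : ℝ) s⟩
  rw [angleUniform, lintegral_smul_measure, smul_eq_mul, setLIntegral_congr Ico_ae_eq_Ioc]
  congr 1
  simpa only [zero_add] using (isAddFundamentalDomain_Ioc two_pi_pos 0).setLIntegral_eq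
    (isAddFundamentalDomain_Ioc two_pi_pos α) f hf.map_vadd_zmultiples

lemma lintegral_angleUniform_add_right {f : ℝ → ℝ≥0∞} (hf : Periodic f (2 * π)) (α : ℝ) :
    ∫⁻ θ, f (θ + α) ∂angleUniform = ∫⁻ θ, f θ ∂angleUniform := by
  rw [lintegral_angleUniform _ 0 (hf.add_const α), lintegral_angleUniform f α hf]
  congr 1
  have h := (measurePreserving_add_right volume α).setLIntegral_comp_emb
    (measurableEmbedding_addRight α) f (Set.Ioc 0 (0 + 2 * π))
  rw [h]
  simp [add_comm]

lemma integrable_angleUniform {f : ℝ → ℝ} (hf : Continuous f) : Integrable f angleUniform :=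
  ((hf.integrableOn_Icc (a := 0) (b := 2 * π)).mono_set Set.Ico_subset_Icc_self).smul_measure
    (ENNReal.inv_ne_top.2 (by simp [pi_pos]))

lemma integral_angleUniform (f : ℝ → ℝ) :
    ∫ θ, f θ ∂angleUniform = (2 * π)⁻¹ * ∫ θ in (0)..(2 * π), f θ := by
  rw [angleUniform, integral_smul_measure, ENNReal.toReal_inv,
    ENNReal.toReal_ofReal two_pi_pos.le, smul_eq_mul, integral_Ico_eq_integral_Ioc,
    ← intervalIntegral.integral_of_le two_pi_pos.le]

lemma integral_sin_sq_mul_cos_sq_angleUniform :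
    ∫ φ, sin φ ^ 2 * cos φ ^ 2 ∂angleUniform = 1 / 8 := by
  have h : sin (4 * (2 * π)) = 0 := by
    rw [show 4 * (2 * π) = (8 : ℕ) * π by norm_num; ring, sin_nat_mul_pi]
  rw [integral_angleUniform, integral_sin_sq_mul_cos_sq, h, mul_zero, sin_zero, sub_zero, sub_self,
    zero_div, sub_zero]
  field_simp

variable {d : ℕ}

lemma setOf_fst_ne_snd_eq_offDiag :
    {p : Fin d × Fin d | p.1 ≠ p.2} = (Finset.univ : Finset (Fin d)).offDiag := by
  ext; simp

lemma pairUniform_eq_uniformOn : pairUniform d = uniformOn {p : Fin d × Fin d | p.1 ≠ p.2} := by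
  have card : Measure.count {p : Fin d × Fin d | p.1 ≠ p.2} = ((d * (d - 1) : ℕ) : ℝ≥0∞) := by
    rw [setOf_fst_ne_snd_eq_offDiag, Measure.count_apply_finset, Finset.offDiag_card,
      Finset.card_fin, Nat.mul_sub_one]
  rw [pairUniform, uniformOn, ProbabilityTheory.cond, card]

lemma ae_ne_pairUniform : ∀ᵐ p ∂pairUniform d, p.1 ≠ p.2 := by
  rw [pairUniform_eq_uniformOn]
  exact ae_cond_mem (Set.toFinite _).measurableSet

instance : SFinite (pairUniform d) := by
  unfold pairUniform
  infer_instance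

instance : SFinite (kacParam d) := by
  unfold kacParam
  infer_instance

lemma ae_ne_kacParam : ∀ᵐ ω ∂kacParam d, ω.1.1 ≠ ω.1.2 :=
  Measure.quasiMeasurePreserving_fst.ae ae_ne_pairUniform

instance [Nontrivial (Fin d)] : IsProbabilityMeasure (pairUniform d) := by
  rw [pairUniform_eq_uniformOn]
  exact isProbabilityMeasure_uniformOn (Set.toFinite _)
    (let ⟨i, j, hij⟩ := exists_pair_ne (Fin d); ⟨(i, j), hij⟩)

instance [Nontrivial (Fin d)] : IsProbabilityMeasure (kacParam d) := by
  unfold kacParam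
  infer_instance

lemma integral_pairUniform (f : Fin d × Fin d → ℝ) :
    ∫ p, f p ∂pairUniform d =
      ((d * (d - 1) : ℕ) : ℝ)⁻¹ * (∑ i, ∑ j, f (i, j) - ∑ i, f (i, i)) := by
  have split : ∑ p ∈ Finset.univ.offDiag, f p + ∑ i, f (i, i) = ∑ i, ∑ j, f (i, j) := by
    rw [← Finset.sum_diag, add_comm, ← Finset.sum_union (Finset.disjoint_diag_offDiag _),
      Finset.diag_union_offDiag, ← Finset.sum_product']
  rw [← split, add_sub_cancel_right, pairUniform, integral_smul_measure,
    ENNReal.toReal_inv, ENNReal.toReal_natCast, setOf_fst_ne_snd_eq_offDiag,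
    setIntegral_finset _ (.of_finite (Finset.finite_toSet _))]
  simp

end UpdateLaw

section Walk

instance {m n : Type*} [Countable m] [Countable n] : BorelSpace (Matrix m n ℝ) :=
  inferInstanceAs (BorelSpace (m → n → ℝ))

instance {m n : Type*} [Countable m] [Countable n] : SecondCountableTopology (Matrix m n ℝ) :=
  inferInstanceAs (SecondCountableTopology (m → n → ℝ))

variable {d : ℕ}

/-- The Markov operator of the energies `x i ^ 2` under the Kac walk, acting on functions of the
vector `p` of energies. -/
def exchangeOp (g : (Fin d → ℝ) → ℝ≥0∞) (p : Fin d → ℝ) : ℝ≥0∞ :=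
  ∫⁻ ω, g (exchange ω.1.1 ω.1.2 ω.2 p) ∂kacParam d

lemma measurable_exchange :
    Measurable fun z : ((Fin d × Fin d) × ℝ) × (Fin d → ℝ) =>
      exchange z.1.1.1 z.1.1.2 z.1.2 z.2 := by
  have h : Measurable fun z : (Fin d × Fin d) × ℝ × (Fin d → ℝ) =>
      exchange z.1.1 z.1.2 z.2.1 z.2.2 :=
    measurable_from_prod_countable_right fun p => (continuous_exchange p.1 p.2).measurable
  exact h.comp MeasurableEquiv.prodAssoc.measurable

lemma measurable_exchange_right (p : Fin d → ℝ) :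
    Measurable fun ω : (Fin d × Fin d) × ℝ => exchange ω.1.1 ω.1.2 ω.2 p :=
  measurable_exchange.comp measurable_prodMk_right

lemma measurable_rotM :
    Measurable fun ω : (Fin d × Fin d) × ℝ => rotM d ω.1.1 ω.1.2 ω.2 :=
  measurable_from_prod_countable_right fun p => (continuous_rotM p.1 p.2).measurable

lemma kacMatrix_succ {T : ℕ} (ω : Fin (T + 1) → (Fin d × Fin d) × ℝ) :
    kacMatrix ω = kacMatrix (fun t => ω t.succ) * rotM d (ω 0).1.1 (ω 0).1.2 (ω 0).2 := by
  simp [kacMatrix, List.ofFn_succ]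

lemma measurable_kacMatrix (T : ℕ) :
    Measurable (kacMatrix : (Fin T → (Fin d × Fin d) × ℝ) → Matrix (Fin d) (Fin d) ℝ) := by
  induction T with
  | zero => exact Subsingleton.measurable
  | succ T ih =>
    rw [funext kacMatrix_succ]
    exact (ih.comp (by fun_prop)).mul (measurable_rotM.comp (measurable_pi_apply 0))

lemma measurable_mulVec {m n : Type*} [Countable m] [Fintype n] :
    Measurable fun z : Matrix m n ℝ × (n → ℝ) => z.1 *ᵥ z.2 :=
  (Continuous.matrix_mulVec continuous_fst continuous_snd).measurable

lemma measurable_sq_mulVec {m n : Type*} [Countable m] [Fintype n] (x : n → ℝ) :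
    Measurable fun Q : Matrix m n ℝ => (Q *ᵥ x) ^ 2 :=
  (measurable_mulVec.comp measurable_prodMk_right).pow_const 2

lemma measurable_exchangeOp {g : (Fin d → ℝ) → ℝ≥0∞} (hg : Measurable g) :
    Measurable (exchangeOp g) :=
  Measurable.lintegral_prod_left' (hg.comp measurable_exchange)

lemma measurable_iterate_exchangeOp {g : (Fin d → ℝ) → ℝ≥0∞} (hg : Measurable g) (T : ℕ) :
    Measurable (exchangeOp^[T] g) := by
  induction T with
  | zero => exact hg
  | succ T ih =>
    rw [iterate_succ_apply']
    exact measurable_exchangeOp ih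

lemma lintegral_rotM_mulVec_sq {g : (Fin d → ℝ) → ℝ≥0∞} (hg : Measurable g) (x : Fin d → ℝ) :
    ∫⁻ ω, g ((rotM d ω.1.1 ω.1.2 ω.2 *ᵥ x) ^ 2) ∂kacParam d = exchangeOp g (x ^ 2) := by
  have rot_meas : Measurable fun ω : (Fin d × Fin d) × ℝ =>
      g ((rotM d ω.1.1 ω.1.2 ω.2 *ᵥ x) ^ 2) :=
    hg.comp ((measurable_sq_mulVec x).comp measurable_rotM)
  have exchange_meas : Measurable fun ω : (Fin d × Fin d) × ℝ =>
      g (exchange ω.1.1 ω.1.2 ω.2 (x ^ 2)) :=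
    hg.comp (measurable_exchange_right _)
  rw [exchangeOp, kacParam, lintegral_prod _ rot_meas.aemeasurable,
    lintegral_prod _ exchange_meas.aemeasurable]
  refine lintegral_congr_ae ?_
  filter_upwards [ae_ne_pairUniform] with p hp
  obtain ⟨α, hα⟩ := exists_sq_rotM_mulVec_eq_exchange hp x
  have periodic : Periodic (fun φ => g (exchange p.1 p.2 φ (x ^ 2))) (2 * π) :=
    fun φ => congrArg g (exchange_add_two_pi _ _ φ _)
  simp_rw [hα]
  exact lintegral_angleUniform_add_right periodic α

lemma lintegral_kacMatrix_mulVec_sq [Nontrivial (Fin d)] {g : (Fin d → ℝ) → ℝ≥0∞}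
    (hg : Measurable g) (T : ℕ) (x : Fin d → ℝ) :
    ∫⁻ ω, g ((kacMatrix ω *ᵥ x) ^ 2) ∂(Measure.pi fun _ : Fin T => kacParam d) =
      exchangeOp^[T] g (x ^ 2) := by
  induction T generalizing x with
  | zero => simp [kacMatrix]
  | succ T ih =>
    have split := measurePreserving_piFinSuccAbove (fun _ : Fin (T + 1) => kacParam d) 0
    have meas : Measurable fun ω : Fin (T + 1) → (Fin d × Fin d) × ℝ =>
        g ((kacMatrix ω *ᵥ x) ^ 2) :=
      hg.comp ((measurable_sq_mulVec x).comp (measurable_kacMatrix _))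
    rw [iterate_succ_apply', ← lintegral_rotM_mulVec_sq (measurable_iterate_exchangeOp hg T),
      ← split.symm.lintegral_comp meas, lintegral_prod]
    swap
    · exact (meas.comp split.symm.measurable).aemeasurable
    refine lintegral_congr fun ω₀ => ?_
    rw [← ih]
    simp [kacMatrix_succ, ← Matrix.mulVec_mulVec, MeasurableEquiv.piFinSuccAbove]

lemma kacMeasure_sq_mulVec_mem [Nontrivial (Fin d)] (t : ℕ) (x : Fin d → ℝ)
    {B : Set (Fin d → ℝ)} (hB : MeasurableSet B) :
    kacMeasure d t {Q | (Q *ᵥ x) ^ 2 ∈ B} = exchangeOp^[t] (B.indicator 1) (x ^ 2) := by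
  have hmem : MeasurableSet {Q : Matrix (Fin d) (Fin d) ℝ | (Q *ᵥ x) ^ 2 ∈ B} :=
    measurable_sq_mulVec x hB
  rw [kacMeasure, ← lintegral_indicator_one hmem,
    lintegral_map (measurable_one.indicator hmem) (measurable_kacMatrix t),
    ← lintegral_kacMatrix_mulVec_sq (measurable_one.indicator hB) t x]
  rfl

end Walk

section Contraction

variable {d : ℕ}

lemma integral_sum_sq_exchange_angleUniform {ι : Type*} [Fintype ι] [DecidableEq ι] {i j : ι}
    (hij : i ≠ j) (p : ι → ℝ) :
    ∫ φ, ∑ k, exchange i j φ p k ^ 2 ∂angleUniform =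
      ∑ k, p k ^ 2 - p i ^ 2 - p j ^ 2 + 3 / 4 * (p i + p j) ^ 2 := by
  simp_rw [sum_sq_exchange hij]
  rw [integral_sub (integrable_const _) (integrable_angleUniform (by fun_prop)),
    integral_const_mul, integral_sin_sq_mul_cos_sq_angleUniform, integral_const, probReal_univ,
    one_smul]
  ring

lemma integral_sum_sq_exchange_pairUniform [Nontrivial (Fin d)] {p : Fin d → ℝ}
    (hp : ∑ k, p k = 0) :
    ∫ ij, (∑ k, p k ^ 2 - p ij.1 ^ 2 - p ij.2 ^ 2 + 3 / 4 * (p ij.1 + p ij.2) ^ 2)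
        ∂pairUniform d =
      (1 - 1 / (2 * d) - 3 / (2 * d * (d - 1))) * ∑ k, p k ^ 2 := by
  rw [integral_pairUniform]
  set S := ∑ k, p k ^ 2 with hS
  have expand (i j : Fin d) : S - p i ^ 2 - p j ^ 2 + 3 / 4 * (p i + p j) ^ 2 =
      S - 1 / 4 * p i ^ 2 - 1 / 4 * p j ^ 2 + 3 / 2 * p i * p j := by ring
  have diagonal (i : Fin d) : 3 / 2 * p i * p i = 3 / 2 * p i ^ 2 := by ring
  simp only [expand, diagonal, Finset.sum_add_distrib, Finset.sum_sub_distrib, ← Finset.mul_sum,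
    hp, ← hS, Finset.sum_const, Finset.card_univ, Fintype.card_fin, nsmul_eq_mul, mul_zero]
  have hd : 1 < d := Fin.nontrivial_iff_two_le.1 ‹_›
  have hd₀ : (d : ℝ) ≠ 0 := by positivity
  have hd₁ : (d : ℝ) - 1 ≠ 0 := sub_ne_zero.2 (by exact_mod_cast hd.ne')
  push_cast [hd.le]
  field_simp
  ring

lemma measurable_sum_sq_exchange (p : Fin d → ℝ) :
    Measurable fun ω : (Fin d × Fin d) × ℝ =>
      ENNReal.ofReal (∑ k, exchange ω.1.1 ω.1.2 ω.2 p k ^ 2) := by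
  have h := measurable_exchange_right p
  fun_prop

lemma exchangeOp_sum_sq_le [Nontrivial (Fin d)] {p : Fin d → ℝ} (hp : ∑ k, p k = 0) :
    exchangeOp (fun q => ENNReal.ofReal (∑ k, q k ^ 2)) p ≤
      ENNReal.ofReal (1 - 1 / (2 * d)) * ENNReal.ofReal (∑ k, p k ^ 2) := by
  have angle_average : ∀ᵐ ij ∂pairUniform d,
      ∫⁻ φ, ENNReal.ofReal (∑ k, exchange ij.1 ij.2 φ p k ^ 2) ∂angleUniform =
        ENNReal.ofReal
          (∑ k, p k ^ 2 - p ij.1 ^ 2 - p ij.2 ^ 2 + 3 / 4 * (p ij.1 + p ij.2) ^ 2) := by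
    filter_upwards [ae_ne_pairUniform] with ij hij
    rw [← ofReal_integral_eq_lintegral_ofReal, integral_sum_sq_exchange_angleUniform hij]
    · exact integrable_angleUniform (by unfold exchange; fun_prop)
    · exact .of_forall fun φ => by positivity
  have nonneg : ∀ᵐ ij ∂pairUniform d,
      0 ≤ ∑ k, p k ^ 2 - p ij.1 ^ 2 - p ij.2 ^ 2 + 3 / 4 * (p ij.1 + p ij.2) ^ 2 := by
    filter_upwards [ae_ne_pairUniform] with ij hij
    rw [← integral_sum_sq_exchange_angleUniform hij]
    positivity
  rw [exchangeOp, kacParam, lintegral_prod _ (measurable_sum_sq_exchange p).aemeasurable,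
    lintegral_congr_ae angle_average, ← ofReal_integral_eq_lintegral_ofReal .of_finite nonneg,
    integral_sum_sq_exchange_pairUniform hp, ← ENNReal.ofReal_mul' (by positivity)]
  have hd : (1 : ℝ) < d := by exact_mod_cast Fin.nontrivial_iff_two_le.1 ‹_›
  refine ENNReal.ofReal_le_ofReal (mul_le_mul_of_nonneg_right (sub_le_self _ ?_) (by positivity))
  exact div_nonneg (by norm_num) (mul_nonneg (by positivity) (sub_nonneg.2 hd.le))

-- Couple two copies of the energy chain by driving them with the same updates.
lemma iterate_exchangeOp_le [Nontrivial (Fin d)] {g b : (Fin d → ℝ) → ℝ≥0∞} {C : ℝ≥0∞}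
    (hb : Measurable b)
    (hgb : ∀ p q, ∑ k, p k = ∑ k, q k → g p ≤ C * ENNReal.ofReal (∑ k, (p - q) k ^ 2) + b q)
    (T : ℕ) {p q : Fin d → ℝ} (hpq : ∑ k, p k = ∑ k, q k) :
    exchangeOp^[T] g p ≤
      C * ENNReal.ofReal (1 - 1 / (2 * d)) ^ T * ENNReal.ofReal (∑ k, (p - q) k ^ 2) +
        exchangeOp^[T] b q := by
  induction T generalizing p q with
  | zero => simpa using hgb p q hpq
  | succ T ih =>
    have meas : Measurable fun ω : (Fin d × Fin d) × ℝ =>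
        exchangeOp^[T] b (exchange ω.1.1 ω.1.2 ω.2 q) :=
      (measurable_iterate_exchangeOp hb T).comp (measurable_exchange_right q)
    rw [iterate_succ_apply', iterate_succ_apply']
    set K := C * ENNReal.ofReal (1 - 1 / (2 * d)) ^ T
    calc exchangeOp (exchangeOp^[T] g) p
        ≤ ∫⁻ ω, (K * ENNReal.ofReal (∑ k, exchange ω.1.1 ω.1.2 ω.2 (p - q) k ^ 2) +
            exchangeOp^[T] b (exchange ω.1.1 ω.1.2 ω.2 q)) ∂kacParam d := by
          refine lintegral_mono_ae ?_
          filter_upwards [ae_ne_kacParam] with ω hω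
          rw [exchange_sub]
          exact ih (by rw [sum_exchange hω, sum_exchange hω, hpq])
      _ = K * exchangeOp (fun r => ENNReal.ofReal (∑ k, r k ^ 2)) (p - q) +
            exchangeOp (exchangeOp^[T] b) q := by
          rw [lintegral_add_right _ meas,
            lintegral_const_mul _ (measurable_sum_sq_exchange (p - q))]
          rfl
      _ ≤ K * (ENNReal.ofReal (1 - 1 / (2 * d)) * ENNReal.ofReal (∑ k, (p - q) k ^ 2)) +
            exchangeOp (exchangeOp^[T] b) q := by
          gcongr
          exact exchangeOp_sum_sq_le (by simp [hpq])
      _ = _ := by rw [pow_succ, ← mul_assoc, ← mul_assoc]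

end Contraction

section Gaussian

variable {ι : Type*} [Fintype ι]

/-- The law of a vector of independent standard Gaussian coordinates. -/
def gaussianVector (ι : Type*) [Fintype ι] : Measure (ι → ℝ) :=
  Measure.pi fun _ => gaussianReal 0 1

instance : IsProbabilityMeasure (gaussianVector ι) := by
  unfold gaussianVector
  infer_instance

/-- The fractions of the energy `∑ l, y l ^ 2` carried by the coordinates of `y`. -/
def energyShare (y : ι → ℝ) (k : ι) : ℝ := y k ^ 2 / ∑ l, y l ^ 2

lemma measurable_energyShare : Measurable (energyShare : (ι → ℝ) → ι → ℝ) := by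
  unfold energyShare
  fun_prop

lemma energyShare_mem_stdSimplex {y : ι → ℝ} (hy : ∑ l, y l ^ 2 ≠ 0) :
    energyShare y ∈ stdSimplex ℝ ι :=
  ⟨fun k => by unfold energyShare; positivity, by
    simp only [energyShare]
    rw [← Finset.sum_div, div_self hy]⟩

lemma energyShare_eq_sq (y : ι → ℝ) : energyShare y = ((√(∑ l, y l ^ 2))⁻¹ • y) ^ 2 := by
  ext k
  rw [energyShare, Pi.pow_apply, Pi.smul_apply, smul_eq_mul, mul_pow, inv_pow,
    sq_sqrt (by positivity), div_eq_inv_mul]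

lemma ae_sum_sq_ne_zero [Nonempty ι] : ∀ᵐ y ∂gaussianVector ι, ∑ l, y l ^ 2 ≠ 0 := by
  have := nullSingletonClass_gaussianReal (μ := 0) (v := 1) one_ne_zero
  obtain ⟨i⟩ := ‹Nonempty ι›
  have coord : ∀ᵐ y ∂gaussianVector ι, y i ≠ 0 :=
    (measurePreserving_eval (fun _ : ι => gaussianReal 0 1) i).quasiMeasurePreserving.ae
      (ae_iff.2 (by simp) : ∀ᵐ x ∂gaussianReal 0 1, x ≠ 0)
  filter_upwards [coord] with y hy
  have : 0 < y i ^ 2 := by positivity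
  exact (this.trans_le (Finset.single_le_sum (f := fun l => y l ^ 2) (fun _ _ => sq_nonneg _)
    (Finset.mem_univ i))).ne'

lemma measurePreserving_mulVec_gaussianVector {A : Matrix ι ι ℝ}
    (hA : ∀ x, ∑ k, (A *ᵥ x) k ^ 2 = ∑ k, x k ^ 2) :
    MeasurePreserving (A *ᵥ ·) (gaussianVector ι) (gaussianVector ι) := by
  classical
  let L : EuclideanSpace ℝ ι →ₗᵢ[ℝ] EuclideanSpace ℝ ι :=
    { Matrix.toEuclideanLin A with
      norm_map' := fun x => by
        simp only [EuclideanSpace.norm_eq, norm_eq_abs, sq_abs]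
        exact congrArg sqrt (hA x.ofLp) }
  have toLp : MeasurePreserving (WithLp.toLp 2) (gaussianVector ι)
      (stdGaussian (EuclideanSpace ℝ ι)) :=
    ⟨by fun_prop, map_pi_eq_stdGaussian⟩
  have isometry : MeasurePreserving (L.toLinearIsometryEquiv rfl)
      (stdGaussian (EuclideanSpace ℝ ι)) (stdGaussian (EuclideanSpace ℝ ι)) :=
    ⟨(LinearIsometryEquiv.continuous _).measurable, stdGaussian_map _⟩
  exact (toLp.symm (MeasurableEquiv.toLp 2 (ι → ℝ))).comp (isometry.comp toLp)

end Gaussian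

section Stationarity

variable {d : ℕ} {g : (Fin d → ℝ) → ℝ≥0∞}

lemma exchangeOp_energyShare (hg : Measurable g) (y : Fin d → ℝ) :
    exchangeOp g (energyShare y) =
      ∫⁻ ω, g (energyShare (rotM d ω.1.1 ω.1.2 ω.2 *ᵥ y)) ∂kacParam d := by
  rw [energyShare_eq_sq, ← lintegral_rotM_mulVec_sq hg]
  refine lintegral_congr_ae ?_
  filter_upwards [ae_ne_kacParam] with ω hω
  rw [energyShare_eq_sq, sum_sq_rotM_mulVec hω, Matrix.mulVec_smul]

variable [Nontrivial (Fin d)]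

lemma lintegral_exchangeOp_energyShare (hg : Measurable g) :
    ∫⁻ y, exchangeOp g (energyShare y) ∂gaussianVector (Fin d) =
      ∫⁻ y, g (energyShare y) ∂gaussianVector (Fin d) := by
  have meas : Measurable fun z : (Fin d → ℝ) × ((Fin d × Fin d) × ℝ) =>
      g (energyShare (rotM d z.2.1.1 z.2.1.2 z.2.2 *ᵥ z.1)) :=
    (hg.comp measurable_energyShare).comp (measurable_mulVec.comp
      ((measurable_rotM.comp measurable_snd).prodMk measurable_fst))
  simp_rw [exchangeOp_energyShare hg]
  rw [lintegral_lintegral_swap meas.aemeasurable]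
  have rotate : ∀ᵐ ω ∂kacParam d,
      ∫⁻ y, g (energyShare (rotM d ω.1.1 ω.1.2 ω.2 *ᵥ y)) ∂gaussianVector (Fin d) =
        ∫⁻ y, g (energyShare y) ∂gaussianVector (Fin d) := by
    filter_upwards [ae_ne_kacParam] with ω hω
    exact (measurePreserving_mulVec_gaussianVector (sum_sq_rotM_mulVec hω _)).lintegral_comp
      (hg.comp measurable_energyShare)
  rw [lintegral_congr_ae rotate, lintegral_const, measure_univ, mul_one]

lemma lintegral_iterate_exchangeOp_energyShare (hg : Measurable g) (T : ℕ) :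
    ∫⁻ y, exchangeOp^[T] g (energyShare y) ∂gaussianVector (Fin d) =
      ∫⁻ y, g (energyShare y) ∂gaussianVector (Fin d) := by
  induction T with
  | zero => rfl
  | succ T ih =>
    rw [iterate_succ_apply',
      lintegral_exchangeOp_energyShare (measurable_iterate_exchangeOp hg T), ih]

end Stationarity

section Concentration

lemma gaussianPDFReal_mul_exp_mul_sq (c x : ℝ) :
    gaussianPDFReal 0 1 x * exp (c * x ^ 2 / 2) =
      (√(2 * π))⁻¹ * exp (-((1 - c) / 2) * x ^ 2) := by
  rw [gaussianPDFReal, mul_assoc, ← exp_add]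
  simp only [NNReal.coe_one, mul_one, sub_zero]
  congr 2
  ring

lemma integrable_exp_mul_sq_gaussianReal {c : ℝ} (hc : c < 1) :
    Integrable (fun x => exp (c * x ^ 2 / 2)) (gaussianReal 0 1) := by
  rw [gaussianReal_of_var_ne_zero 0 one_ne_zero, integrable_withDensity_iff
    (measurable_gaussianPDF 0 1) (.of_forall fun x => gaussianPDF_lt_top)]
  simp_rw [toReal_gaussianPDF, mul_comm _ (gaussianPDFReal 0 1 _), gaussianPDFReal_mul_exp_mul_sq]
  exact (integrable_exp_neg_mul_sq (by linarith)).const_mul _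

lemma integral_exp_mul_sq_gaussianReal {c : ℝ} (hc : c < 1) :
    ∫ x, exp (c * x ^ 2 / 2) ∂gaussianReal 0 1 = (√(1 - c))⁻¹ := by
  have hc' : 1 - c ≠ 0 := (sub_pos.2 hc).ne'
  simp_rw [integral_gaussianReal_eq_integral_smul one_ne_zero, smul_eq_mul,
    gaussianPDFReal_mul_exp_mul_sq]
  rw [integral_const_mul, integral_gaussian, ← sqrt_inv, ← sqrt_mul (by positivity), ← sqrt_inv]
  congr 1
  field_simp

variable {ι : Type*} [Fintype ι]

lemma gaussianVector_quadratic_nonneg_le {c : ι → ℝ} (hc : ∀ i, c i < 1) :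
    gaussianVector ι {y | 0 ≤ ∑ i, c i * y i ^ 2} ≤ ENNReal.ofReal (∏ i, (√(1 - c i))⁻¹) := by
  have factor (y : ι → ℝ) :
      exp (1 / 2 * ∑ i, c i * y i ^ 2) = ∏ i, exp (c i * y i ^ 2 / 2) := by
    rw [← exp_sum, Finset.mul_sum]
    congr! 2
    ring
  have integrable : Integrable (fun y : ι → ℝ => exp (1 / 2 * ∑ i, c i * y i ^ 2))
      (gaussianVector ι) := by
    simp_rw [factor]
    exact Integrable.fintype_prod fun i => integrable_exp_mul_sq_gaussianReal (hc i)
  have mgf_eq : mgf (fun y : ι → ℝ => ∑ i, c i * y i ^ 2) (gaussianVector ι) (1 / 2) =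
      ∏ i, (√(1 - c i))⁻¹ := by
    simp_rw [mgf, factor, gaussianVector]
    rw [integral_fintype_prod_eq_prod fun i x => exp (c i * x ^ 2 / 2)]
    exact Finset.prod_congr rfl fun i _ => integral_exp_mul_sq_gaussianReal (hc i)
  have chernoff := measure_ge_le_exp_mul_mgf 0 (by norm_num) integrable
  rw [mgf_eq, mul_zero, exp_zero, one_mul] at chernoff
  rw [← ofReal_measureReal]
  exact ENNReal.ofReal_le_ofReal chernoff

lemma gaussianVector_weighted_sum_sq_nonneg_le {u : ι → ℝ} (hu : ∀ i, -1 < u i) :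
    gaussianVector ι {y | 0 ≤ ∑ i, u i / (1 + u i) * y i ^ 2} ≤
      ENNReal.ofReal (∏ i, √(1 + u i)) := by
  have one_sub (i : ι) : 1 - u i / (1 + u i) = (1 + u i)⁻¹ := by
    rw [one_sub_div (by linarith [hu i]), add_sub_cancel_right, one_div]
  have lt_one (i : ι) : u i / (1 + u i) < 1 := by
    rw [← sub_pos, one_sub, inv_pos]
    linarith [hu i]
  simpa only [one_sub, sqrt_inv, inv_inv] using gaussianVector_quadratic_nonneg_le lt_one

lemma sqrt_one_add_le_exp (u : ℝ) : √(1 + u) ≤ exp (u / 2) := by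
  rw [exp_half, add_comm]
  exact sqrt_le_sqrt (add_one_le_exp u)

lemma sqrt_one_add_le_exp_sub_sq {δ : ℝ} (h₁ : -1 < δ) (h₂ : δ ≤ 2) :
    √(1 + δ) ≤ exp ((δ - δ ^ 2 / 8) / 2) := by
  refine sqrt_le_iff.2 ⟨(exp_pos _).le, ?_⟩
  have linear := add_one_le_exp ((δ - δ ^ 2 / 8) / 2)
  have quadratic : 1 + δ ≤ ((δ - δ ^ 2 / 8) / 2 + 1) ^ 2 := by
    have : 0 ≤ δ ^ 2 * (1 / 8 - δ / 16 + δ ^ 2 / 256) :=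
      mul_nonneg (sq_nonneg δ) (by nlinarith)
    linarith
  exact quadratic.trans (pow_le_pow_left₀ (by nlinarith) linear 2)

@[to_additive]
lemma prod_comp_piecewise [DecidableEq ι] {α M : Type*} [CommMonoid M] (s : Finset ι)
    (f : ι → α → M) (u v : ι → α) :
    ∏ i, f i (s.piecewise u v i) = (∏ i ∈ s, f i (u i)) * ∏ i ∈ sᶜ, f i (v i) := by
  rw [← Finset.prod_mul_prod_compl s]
  congr 1 <;> refine Finset.prod_congr rfl fun i hi => ?_
  · rw [Finset.piecewise_eq_of_mem _ _ _ hi]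
  · rw [Finset.piecewise_eq_of_notMem _ _ _ (Finset.mem_compl.1 hi)]

lemma prod_sqrt_one_add_piecewise_le [DecidableEq ι] {s : Finset ι} {δ x : ℝ} (h₁ : -1 < δ)
    (h₂ : δ ≤ 2) (hx : #sᶜ * x = #s * δ) :
    ∏ i, √(1 + s.piecewise (fun _ => δ) (fun _ => -x) i) ≤ exp (-(δ ^ 2 * #s) / 16) := by
  rw [prod_comp_piecewise s (fun _ v => √(1 + v)), Finset.prod_const, Finset.prod_const]
  calc √(1 + δ) ^ #s * √(1 + -x) ^ #sᶜ
      ≤ exp ((δ - δ ^ 2 / 8) / 2) ^ #s * exp (-x / 2) ^ #sᶜ := by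
        gcongr
        · exact sqrt_one_add_le_exp_sub_sq h₁ h₂
        · exact sqrt_one_add_le_exp (-x)
    _ = exp (-(δ ^ 2 * #s) / 16) := by
        rw [← exp_nat_mul, ← exp_nat_mul, ← exp_add]
        congr 1
        linear_combination -hx / 2

-- The sign of `δ` selects the upper or the lower tail.
lemma gaussianVector_sum_sq_tail_le {s : Finset ι} {δ : ℝ} (h₁ : -1 < δ)
    (h₂ : δ ≤ 2) (hs : #s < Fintype.card ι) (hδ : (1 + δ) * #s < Fintype.card ι) :
    gaussianVector ι {y | 0 ≤ δ * (Fintype.card ι * ∑ i ∈ s, y i ^ 2 -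
        (1 + δ) * #s * ∑ i, y i ^ 2)} ≤
      ENNReal.ofReal (exp (-(δ ^ 2 * #s) / 16)) := by
  classical
  have hm : (0 : ℝ) < #sᶜ := by
    exact_mod_cast Finset.card_compl s ▸ Nat.sub_pos_of_lt hs
  have hcard : (Fintype.card ι : ℝ) = #s + #sᶜ := by
    exact_mod_cast (Finset.card_add_card_compl s).symm
  obtain ⟨x, hx⟩ : ∃ x, #sᶜ * x = #s * δ := ⟨#s * δ / #sᶜ, by field_simp⟩
  have hx₁ : x < 1 := lt_of_mul_lt_mul_left (by linarith) hm.le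
  set u : ι → ℝ := s.piecewise (fun _ => δ) fun _ => -x
  have hu (i : ι) : -1 < u i := by
    by_cases hi : i ∈ s <;> simp [u, hi, h₁, hx₁]
  have weighted_sum (y : ι → ℝ) :
      δ * (Fintype.card ι * ∑ i ∈ s, y i ^ 2 - (1 + δ) * #s * ∑ i, y i ^ 2) =
        #sᶜ * (1 - x) * (1 + δ) * ∑ i, u i / (1 + u i) * y i ^ 2 := by
    have hδ₀ : 1 + δ ≠ 0 := by linarith
    have hx₀ : 1 - x ≠ 0 := by linarith
    rw [sum_comp_piecewise s (fun i v => v / (1 + v) * y i ^ 2), ← Finset.mul_sum,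
      ← Finset.mul_sum, ← Finset.sum_add_sum_compl s, hcard, ← sub_eq_add_neg]
    field_simp
    linear_combination
      ((1 + δ) * ∑ i ∈ sᶜ, y i ^ 2 + δ * ∑ i ∈ s, y i ^ 2) * hx
  refine (measure_mono fun y hy => ?_).trans
    ((gaussianVector_weighted_sum_sq_nonneg_le hu).trans
      (ENNReal.ofReal_le_ofReal (prod_sqrt_one_add_piecewise_le h₁ h₂ hx)))
  rw [Set.mem_ofPred_eq, weighted_sum] at hy
  exact nonneg_of_mul_nonneg_right hy
    (mul_pos (mul_pos hm (sub_pos.2 hx₁)) (by linarith))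

lemma sum_energyShare (s : Finset ι) (y : ι → ℝ) :
    ∑ i ∈ s, energyShare y i = (∑ i ∈ s, y i ^ 2) / ∑ l, y l ^ 2 :=
  (Finset.sum_div ..).symm

lemma sum_le_one_of_mem_stdSimplex {p : ι → ℝ} (hp : p ∈ stdSimplex ℝ ι) (s : Finset ι) :
    ∑ i ∈ s, p i ≤ 1 :=
  hp.2 ▸ Finset.sum_le_sum_of_subset_of_nonneg s.subset_univ fun i _ _ => hp.1 i

variable [Nonempty ι]

lemma gaussianVector_sum_energyShare_gt_le (s : Finset ι) {δ : ℝ} (h₁ : 0 < δ) (h₂ : δ ≤ 2) :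
    gaussianVector ι {y | (1 + δ) * #s / Fintype.card ι < ∑ i ∈ s, energyShare y i} ≤
      ENNReal.ofReal (exp (-(δ ^ 2 * #s) / 16)) := by
  have hN : (0 : ℝ) < Fintype.card ι := by exact_mod_cast Fintype.card_pos
  rcases le_or_gt (Fintype.card ι : ℝ) ((1 + δ) * #s) with h | h
  · refine (measure_eq_zero_iff_ae_notMem.2 ?_).trans_le zero_le
    filter_upwards [ae_sum_sq_ne_zero] with y hy
    exact not_lt.2 ((sum_le_one_of_mem_stdSimplex (energyShare_mem_stdSimplex hy) s).trans
      ((one_le_div hN).2 h))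
  · have hs : #s < Fintype.card ι := by
      have : (0 : ℝ) ≤ δ * #s := by positivity
      exact_mod_cast (by linarith : (#s : ℝ) < Fintype.card ι)
    refine (measure_mono_ae ?_).trans (gaussianVector_sum_sq_tail_le (by linarith) h₂ hs h)
    filter_upwards [ae_sum_sq_ne_zero] with y hy (hlt : (1 + δ) * #s / Fintype.card ι < _)
    have hS : 0 < ∑ l, y l ^ 2 := lt_of_le_of_ne (by positivity) hy.symm
    rw [sum_energyShare, div_lt_div_iff₀ hN hS] at hlt
    exact mul_nonneg h₁.le (by linarith)

lemma gaussianVector_sum_energyShare_lt_le (s : Finset ι) {δ : ℝ} (hδ : 0 < δ) :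
    gaussianVector ι {y | ∑ i ∈ s, energyShare y i < (1 - δ) * #s / Fintype.card ι} ≤
      ENNReal.ofReal (exp (-(δ ^ 2 * #s) / 16)) := by
  have hN : (0 : ℝ) < Fintype.card ι := by exact_mod_cast Fintype.card_pos
  by_cases h : δ < 1 ∧ #s < Fintype.card ι
  · have hs : (#s : ℝ) < Fintype.card ι := by exact_mod_cast h.2
    have hδs : (1 + -δ) * #s < Fintype.card ι := by
      have : (0 : ℝ) ≤ δ * #s := by positivity
      linarith
    rw [← neg_sq δ]
    refine (measure_mono_ae ?_).trans
      (gaussianVector_sum_sq_tail_le (by linarith) (by linarith) h.2 hδs)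
    filter_upwards [ae_sum_sq_ne_zero] with y hy (hlt : _ < (1 - δ) * #s / Fintype.card ι)
    have hS : 0 < ∑ l, y l ^ 2 := lt_of_le_of_ne (by positivity) hy.symm
    rw [sum_energyShare, div_lt_div_iff₀ hS hN] at hlt
    exact mul_nonneg_of_nonpos_of_nonpos (by linarith) (by linarith)
  · refine (measure_eq_zero_iff_ae_notMem.2 ?_).trans_le zero_le
    filter_upwards [ae_sum_sq_ne_zero] with y hy
    refine not_lt.2 ?_
    have hp := energyShare_mem_stdSimplex hy
    rcases not_and_or.1 h with hδ₁ | hs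
    · refine (div_nonpos_of_nonpos_of_nonneg ?_ hN.le).trans (Finset.sum_nonneg fun i _ => hp.1 i)
      exact mul_nonpos_of_nonpos_of_nonneg (by linarith) (by positivity)
    · have hs' := s.card_eq_iff_eq_univ.1 (s.card_le_univ.antisymm (not_lt.1 hs))
      rw [hs', hp.2, Finset.card_univ, mul_div_cancel_right₀ _ hN.ne']
      linarith

end Concentration

section Deviation

variable {ι : Type*} [Fintype ι]

/-- The energy vectors for which the energy carried by `s` deviates by more than a factor `ε` from
the proportional share `#s / card ι` of a unit total energy. -/
def deviationSet (s : Finset ι) (ε : ℝ) : Set (ι → ℝ) :=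
  {p | ∑ i ∈ s, p i ∉ Set.Icc ((1 - ε) * #s / Fintype.card ι) ((1 + ε) * #s / Fintype.card ι)}

lemma measurableSet_deviationSet (s : Finset ι) (ε : ℝ) : MeasurableSet (deviationSet s ε) :=
  (Finset.measurable_sum s fun i _ => measurable_pi_apply i) measurableSet_Icc.compl

lemma mem_deviationSet_iff {s : Finset ι} {ε : ℝ} {p : ι → ℝ} :
    p ∈ deviationSet s ε ↔
      ε * #s / Fintype.card ι < |∑ i ∈ s, p i - #s / Fintype.card ι| := by
  rw [deviationSet, Set.mem_ofPred_eq, one_sub_mul, one_add_mul, sub_div, add_div,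
    ← Set.mem_Icc_iff_abs_le, not_le, abs_sub_comm]

lemma gaussianVector_energyShare_mem_deviationSet_le [Nonempty ι] (s : Finset ι) {δ : ℝ}
    (h₁ : 0 < δ) (h₂ : δ ≤ 2) :
    gaussianVector ι (energyShare ⁻¹' deviationSet s δ) ≤
      ENNReal.ofReal (2 * exp (-(δ ^ 2 * #s) / 16)) := by
  rw [two_mul, ENNReal.ofReal_add (exp_pos _).le (exp_pos _).le]
  refine (measure_mono fun y hy => ?_).trans ((measure_union_le _ _).trans
    (add_le_add (gaussianVector_sum_energyShare_lt_le s h₁)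
      (gaussianVector_sum_energyShare_gt_le s h₁ h₂)))
  exact (not_and_or.1 hy).imp not_le.1 not_le.1

lemma one_le_of_mem_deviationSet {s : Finset ι} (hs : s.Nonempty) {ε : ℝ} (hε : 0 < ε)
    {p q : ι → ℝ} (hp : p ∈ deviationSet s ε) (hq : q ∉ deviationSet s (ε / 2)) :
    1 ≤ 4 * Fintype.card ι ^ 2 / (ε ^ 2 * #s) * ∑ k, (p - q) k ^ 2 := by
  have : Nonempty ι := hs.to_type
  have hcard : (0 : ℝ) < #s := by exact_mod_cast hs.card_pos
  have hN : (0 : ℝ) < Fintype.card ι := by exact_mod_cast Fintype.card_pos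
  rw [mem_deviationSet_iff] at hp
  rw [mem_deviationSet_iff, not_lt] at hq
  have gap : ε * #s / (2 * Fintype.card ι) ≤ |∑ i ∈ s, (p - q) i| := by
    have triangle := abs_sub_abs_le_abs_sub (∑ i ∈ s, p i - #s / Fintype.card ι)
      (∑ i ∈ s, q i - #s / Fintype.card ι)
    have halves : ε * #s / (2 * Fintype.card ι) =
        ε * #s / Fintype.card ι - ε / 2 * #s / Fintype.card ι := by ring
    rw [sub_sub_sub_cancel_right] at triangle
    simp only [Pi.sub_apply, Finset.sum_sub_distrib]
    linarith
  have energy : (ε * #s / (2 * Fintype.card ι)) ^ 2 ≤ #s * ∑ k, (p - q) k ^ 2 :=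
    calc (ε * #s / (2 * Fintype.card ι)) ^ 2
        ≤ (∑ i ∈ s, (p - q) i) ^ 2 := by
          rw [← sq_abs (∑ i ∈ s, (p - q) i)]
          exact pow_le_pow_left₀ (by positivity) gap 2
      _ ≤ #s * ∑ i ∈ s, (p - q) i ^ 2 := sq_sum_le_card_mul_sum_sq
      _ ≤ #s * ∑ k, (p - q) k ^ 2 := by
          gcongr
          exact s.subset_univ
  rw [div_mul_eq_mul_div, one_le_div (by positivity)]
  rw [div_pow, div_le_iff₀ (by positivity)] at energy
  exact le_of_mul_le_mul_left (by linarith) hcard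

lemma indicator_deviationSet_le {s : Finset ι} (hs : s.Nonempty) {ε : ℝ} (hε : 0 < ε)
    (p q : ι → ℝ) :
    (deviationSet s ε).indicator (1 : (ι → ℝ) → ℝ≥0∞) p ≤
      ENNReal.ofReal (4 * Fintype.card ι ^ 2 / (ε ^ 2 * #s)) *
          ENNReal.ofReal (∑ k, (p - q) k ^ 2) +
        (deviationSet s (ε / 2)).indicator 1 q := by
  by_cases hp : p ∈ deviationSet s ε
  · by_cases hq : q ∈ deviationSet s (ε / 2)
    · simp [hp, hq]
    · rw [Set.indicator_of_mem hp, ← ENNReal.ofReal_mul (by positivity)]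
      exact le_add_right (ENNReal.one_le_ofReal.2 (one_le_of_mem_deviationSet hs hε hp hq))
  · simp [hp]

end Deviation

section Mixing

lemma sum_sq_sub_le_two {ι : Type*} [Fintype ι] {p q : ι → ℝ} (hp : p ∈ stdSimplex ℝ ι)
    (hq : q ∈ stdSimplex ℝ ι) : ∑ k, (p - q) k ^ 2 ≤ 2 := by
  calc ∑ k, (p - q) k ^ 2
      ≤ ∑ k, (p k + q k) := Finset.sum_le_sum fun k _ => by
        have hp₁ := mem_Icc_of_mem_stdSimplex hp k
        have hq₁ := mem_Icc_of_mem_stdSimplex hq k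
        rw [Pi.sub_apply]
        nlinarith [hp₁.1, hp₁.2, hq₁.1, hq₁.2]
    _ = 2 := by rw [Finset.sum_add_distrib, hp.2, hq.2, one_add_one_eq_two]

variable {d : ℕ} [Nontrivial (Fin d)]

-- Average the coupling inequality over the second copy started from its stationary law.
lemma iterate_exchangeOp_le_lintegral_gaussianVector {g b : (Fin d → ℝ) → ℝ≥0∞} {C : ℝ≥0∞}
    (hb : Measurable b)
    (hgb : ∀ p q, ∑ k, p k = ∑ k, q k → g p ≤ C * ENNReal.ofReal (∑ k, (p - q) k ^ 2) + b q)
    (T : ℕ) {p : Fin d → ℝ} (hp : p ∈ stdSimplex ℝ (Fin d)) :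
    exchangeOp^[T] g p ≤
      C * ENNReal.ofReal (1 - 1 / (2 * d)) ^ T * 2 +
        ∫⁻ y, b (energyShare y) ∂gaussianVector (Fin d) := by
  set K := C * ENNReal.ofReal (1 - 1 / (2 * d)) ^ T
  have pointwise : ∀ᵐ y ∂gaussianVector (Fin d),
      exchangeOp^[T] g p ≤ K * 2 + exchangeOp^[T] b (energyShare y) := by
    filter_upwards [ae_sum_sq_ne_zero] with y hy
    have hy' := energyShare_mem_stdSimplex hy
    refine (iterate_exchangeOp_le hb hgb T (hp.2.trans hy'.2.symm)).trans ?_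
    gcongr
    exact ENNReal.ofReal_le_ofNat.2 (sum_sq_sub_le_two hp hy')
  calc exchangeOp^[T] g p
      = ∫⁻ _, exchangeOp^[T] g p ∂gaussianVector (Fin d) := by simp
    _ ≤ ∫⁻ y, (K * 2 + exchangeOp^[T] b (energyShare y)) ∂gaussianVector (Fin d) :=
        lintegral_mono_ae pointwise
    _ = K * 2 + ∫⁻ y, b (energyShare y) ∂gaussianVector (Fin d) := by
        rw [lintegral_add_left measurable_const, lintegral_const, measure_univ, mul_one,
          lintegral_iterate_exchangeOp_energyShare hb]

lemma ofReal_one_sub_pow_le_exp (a : ℝ) (T : ℕ) :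
    ENNReal.ofReal (1 - a) ^ T ≤ ENNReal.ofReal (exp (-(T * a))) := by
  rw [← mul_neg, exp_nat_mul, ENNReal.ofReal_pow (exp_pos _).le]
  gcongr
  exact one_sub_le_exp_neg a

lemma iterate_exchangeOp_deviationSet_le {s : Finset (Fin d)} (hs : s.Nonempty) {ε : ℝ}
    (hε₁ : 0 < ε) (hε₂ : ε ≤ 4) (T : ℕ) {p : Fin d → ℝ} (hp : p ∈ stdSimplex ℝ (Fin d)) :
    exchangeOp^[T] ((deviationSet s ε).indicator 1) p ≤
      ENNReal.ofReal (8 * d ^ 2 / (ε ^ 2 * #s) * exp (-T / (2 * d)) +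
        2 * exp (-(ε ^ 2 * #s) / 64)) := by
  have hmeas := measurableSet_deviationSet s (ε / 2)
  have coupling := iterate_exchangeOp_le_lintegral_gaussianVector
    (measurable_one.indicator hmeas) (fun p q _ => indicator_deviationSet_le hs hε₁ p q) T hp
  have stationary : ∫⁻ y, (deviationSet s (ε / 2)).indicator 1 (energyShare y)
      ∂gaussianVector (Fin d) ≤ ENNReal.ofReal (2 * exp (-(ε ^ 2 * #s) / 64)) := by
    have tail := gaussianVector_energyShare_mem_deviationSet_le s (half_pos hε₁) (by linarith)
    have exponent : -((ε / 2) ^ 2 * #s) / 16 = -(ε ^ 2 * #s) / 64 := by ring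
    rwa [← lintegral_indicator_one (measurable_energyShare hmeas), exponent] at tail
  rw [Fintype.card_fin] at coupling
  rw [ENNReal.ofReal_add (by positivity) (by positivity)]
  refine coupling.trans (add_le_add ?_ stationary)
  calc ENNReal.ofReal (4 * d ^ 2 / (ε ^ 2 * #s)) * ENNReal.ofReal (1 - 1 / (2 * d)) ^ T * 2
      ≤ ENNReal.ofReal (4 * d ^ 2 / (ε ^ 2 * #s)) *
          ENNReal.ofReal (exp (-(T * (1 / (2 * d))))) * ENNReal.ofReal 2 := by
        rw [ENNReal.ofReal_ofNat]
        gcongr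
        exact ofReal_one_sub_pow_le_exp _ T
    _ = ENNReal.ofReal (8 * d ^ 2 / (ε ^ 2 * #s) * exp (-T / (2 * d))) := by
        rw [← ENNReal.ofReal_mul (by positivity), ← ENNReal.ofReal_mul (by positivity)]
        ring_nf

end Mixing

theorem kac_first_coords_concentration_general {d : ℕ} (hd : 2 ≤ d) (X₀ : Fin d → ℝ)
    (hX₀ : ∑ i, X₀ i ^ 2 = 1) {ε : ℝ} (hε₁ : 0 < ε) (hε₂ : ε ≤ 4) {s : Finset (Fin d)}
    (hs : s.Nonempty) (t : ℕ) :
    kacMeasure d t {Q | ∑ i ∈ s, (Q.mulVec X₀ i) ^ 2 ∉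
        Set.Icc ((1 - ε) * #s / d) ((1 + ε) * #s / d)} ≤
      ENNReal.ofReal (8 * d ^ 2 / (ε ^ 2 * #s) * exp (-t / (2 * d)) +
        2 * exp (-(ε ^ 2 * #s) / 64)) := by
  have : Nontrivial (Fin d) := Fin.nontrivial_iff_two_le.2 hd
  have hX₀' : X₀ ^ 2 ∈ stdSimplex ℝ (Fin d) := ⟨fun i => sq_nonneg (X₀ i), hX₀⟩
  have bound := iterate_exchangeOp_deviationSet_le hs hε₁ hε₂ t hX₀'
  rw [← kacMeasure_sq_mulVec_mem t X₀ (measurableSet_deviationSet s ε)] at bound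
  simpa only [deviationSet, Fintype.card_fin, Set.mem_ofPred_eq, Pi.pow_apply] using bound

lemma eight_mul_sq_div_le {d k ε : ℝ} (hε : 0 < ε) (hεd : 1 ≤ ε * d) (hk : 1 ≤ k) :
    8 * d ^ 2 / (ε ^ 2 * k) ≤ 8 * d ^ 4 := by
  rw [div_le_iff₀ (by positivity)]
  calc 8 * d ^ 2 = 8 * d ^ 2 * (1 * 1) := by ring
    _ ≤ 8 * d ^ 2 * ((ε * d) ^ 2 * k) := by
        gcongr
        exact one_le_pow₀ hεd
    _ = 8 * d ^ 4 * (ε ^ 2 * k) := by ring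

/-- **Lemma 3.4(1)**: concentration for sums of squares of the first `k` coordinates of the
Kac walk applied to a fixed unit vector. -/
theorem kac_first_coords_concentration
    {d : ℕ} (X₀ : Fin d → ℝ) (hX₀ : ∑ i, X₀ i ^ 2 = 1)
    (ε : ℝ) (hε₁ : 1 / d < ε) (hε₂ : ε < 1 / 2)
    (k : ℕ) (hk₁ : 1 ≤ k) (hk₂ : k ≤ d) (t : ℕ) :
    kacMeasure d t {Q : Matrix (Fin d) (Fin d) ℝ |
        ∑ i ∈ Finset.univ.filter (fun i : Fin d => (i : ℕ) < k), (Q.mulVec X₀ i) ^ 2 ∉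
          Set.Icc ((1 - ε) * k / d) ((1 + ε) * k / d)} ≤
      ENNReal.ofReal (8 * d ^ 4 * Real.exp (-(t : ℝ) / (2 * d)) +
        2 * Real.exp (-(ε ^ 2 * k) / 64)) := by
  have hk : (1 : ℝ) ≤ k := by exact_mod_cast hk₁
  have hd₀ : (0 : ℝ) < d := by exact_mod_cast hk₁.trans hk₂
  have hε₀ : 0 < ε := (by positivity : (0 : ℝ) < 1 / d).trans hε₁
  have hεd : 1 < ε * d := (div_lt_iff₀ hd₀).1 hε₁
  have hd : 2 ≤ d := by exact_mod_cast (by nlinarith : (2 : ℝ) < d).le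
  have hcard : #{i : Fin d | (i : ℕ) < k} = k := by
    rw [Fin.card_filter_val_lt, min_eq_right hk₂]
  have general := kac_first_coords_concentration_general hd X₀ hX₀ hε₀ (by linarith)
    (Finset.card_pos.1 (hcard ▸ hk₁)) t
  rw [hcard] at general
  refine general.trans (ENNReal.ofReal_le_ofReal ?_)
  gcongr
  exact eight_mul_sq_div_le hε₀ hεd.le hk

end KacJL
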